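/- For every causal model M and any two binary endogenous variables X, Y ∈ V (with values in {0,1}) such that P_M(X=1, Y=1) > 0: the Probability of Necessity computed via the B-semantics equals the Probability of Necessity computed in the PO-SCM, i.e., PN^B = P^B((Y=0)_{X←0} | X=1, Y=1) = P^N((Y=0)_{X←0} | X=1, Y=1) = PN^N. -/

import Mathlib

/-!
In the PO-SCM an endogenous variable merely reads off the potential outcome selected by its
parents, so a world `w` reads exactly one potential outcome per variable. Potential outcomes are
independent, hence conditioning them on an actual world `a` turns those that `a` reads into point
masses and leaves the others unchanged: this is the refinement of the model at `a`. The
conditional probability that a potential-outcome vector produces `w` under an intervention is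
therefore the truncated factorization of `w` in the refinement. Exogenous variables are roots, so
conditioning on them amounts to intervening on them; as every truncated factorization has total
mass one, the normalizing constants of the counterfactuals are the exogenous probabilities.
-/

open Finset

noncomputable section

attribute [local instance] Classical.propDecidable

/-- An assignment of values to the variables. -/
abbrev Asg {ν : Type} (Val : ν → Type) : Type := (i : ν) → Val i

/-- A probabilistic causal model (a causal Bayesian network with explicit exogenous
variables): a signature (variables `ν` with value sets `Val`), a graph given by the
parent map `pa` (with `ord` a witness of acyclicity, and the variables in `exo` being
the roots), and a joint probability distribution that is Markov relative to the graph,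
presented by the conditional probability table `cpt i w x = P(i = x | pa i = w|_{pa i})`
of each variable given its parents (for exogenous variables this is the marginal). -/
structure CM (ν : Type) (Val : ν → Type) : Type where
  exo : Finset ν
  pa : ν → Finset ν
  ord : ν → ℕ
  cpt : (i : ν) → Asg Val → Val i → ℝ

/-- A basic counterfactual event `(Y = yv)_{X ← xv}`. -/
structure CFEvent (ν : Type) (Val : ν → Type) : Type where
  X : Finset ν
  xv : Asg Val
  Y : Finset ν
  yv : Asg Val

namespace CM

variable {ν : Type} {Val : ν → Type}

/-- Well-formedness of a causal model: exogenous variables are roots, the graph is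
acyclic, the conditional probability table of each variable depends only on its
parents, and each table is a probability distribution. -/
structure WF [Fintype ν] [∀ i, Fintype (Val i)] (M : CM ν Val) : Prop where
  pa_exo : ∀ i ∈ M.exo, M.pa i = ∅
  acyclic : ∀ i j, j ∈ M.pa i → M.ord j < M.ord i
  cpt_pa : ∀ (i : ν) (w w' : Asg Val) (x : Val i),
    (∀ j ∈ M.pa i, w j = w' j) → M.cpt i w x = M.cpt i w' x
  cpt_nonneg : ∀ i w x, 0 ≤ M.cpt i w x
  cpt_sum : ∀ i w, ∑ x, M.cpt i w x = 1

variable [Fintype ν] [∀ i, Fintype (Val i)] [∀ i, Nonempty (Val i)]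

variable (M : CM ν Val)

/-- The joint distribution `P(U = u, V = v)` (Markov factorization). -/
def joint (w : Asg Val) : ℝ := ∏ i, M.cpt i w (w i)

/-- The interventional distribution `P_{do(X = xv)}` (truncated factorization). -/
def pdo (X : Finset ν) (xv w : Asg Val) : ℝ :=
  if ∀ i ∈ X, w i = xv i then ∏ i ∈ Xᶜ, M.cpt i w (w i) else 0

/-- `P_{do(X = xv)}(Y = yv | U = u)`, where `u` is the exogenous part of `w`:
the probability of the basic counterfactual `(Y = yv)_{X ← xv}` given the world `w`. -/
def cfBasic (X : Finset ν) (xv : Asg Val) (Y : Finset ν) (yv : Asg Val) (w : Asg Val) : ℝ :=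
  (∑ w' : Asg Val,
      if (∀ i ∈ M.exo, w' i = w i) ∧ ∀ i ∈ Y, w' i = yv i then M.pdo X xv w' else 0) /
  (∑ w' : Asg Val, if ∀ i ∈ M.exo, w' i = w i then M.pdo X xv w' else 0)

/-- The probability of a complex counterfactual
`P(y_x, …, z_w) = Σ_{(u,v)} P(y_x | u,v) ⋯ P(z_w | u,v) P(u,v)`. -/
def cfProb (evs : List (CFEvent ν Val)) : ℝ :=
  ∑ w : Asg Val, (evs.map fun e => M.cfBasic e.X e.xv e.Y e.yv w).prod * M.joint w

/-- Conditional probability of a complex counterfactual given an actual event `Z = zv`: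
`P(y_x, …, z_w | Z = zv) = P(y_x, …, z_w, Z = zv) / P(Z = zv)`. -/
def cfProbCond (evs : List (CFEvent ν Val)) (Z : Finset ν) (zv : Asg Val) : ℝ :=
  (∑ w : Asg Val,
      (if ∀ i ∈ Z, w i = zv i then (evs.map fun e => M.cfBasic e.X e.xv e.Y e.yv w).prod
       else 0) * M.joint w) /
  (∑ w : Asg Val, if ∀ i ∈ Z, w i = zv i then M.joint w else 0)

/-- `M` is a structural causal model: every endogenous variable is a deterministic
function of its parents (the exogenous variables are automatically mutually
independent in this presentation). -/
def IsSCM : Prop :=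
  ∀ i ∉ M.exo, ∀ (w : Asg Val) (x : Val i), M.cpt i w x = 0 ∨ M.cpt i w x = 1

/-- The actualized refinement `M^{(u,v)}` of `M` at the actual world `a`:
for each endogenous variable, the conditional distribution given the *actual* values of
its parents is replaced by the point mass at the actual value of the variable. -/
def refine (a : Asg Val) : CM ν Val where
  exo := M.exo
  pa := M.pa
  ord := M.ord
  cpt := fun i w x =>
    if i ∉ M.exo ∧ ∀ j ∈ M.pa i, w j = a j then (if x = a i then 1 else 0)
    else M.cpt i w x

/-- The B-semantics probability of a basic counterfactual,
`P^B((Y = yv)_{X ← xv} | a) = (P^{a})_{do(X = xv)}(Y = yv | U = u)` where `u` is the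
exogenous part of the actual world `a`. -/
def pbBasic (a : Asg Val) (X : Finset ν) (xv : Asg Val) (Y : Finset ν) (yv : Asg Val) : ℝ :=
  (M.refine a).cfBasic X xv Y yv a

/-- The B-semantics probability of a complex counterfactual. -/
def pbProb (evs : List (CFEvent ν Val)) : ℝ :=
  ∑ w : Asg Val, (evs.map fun e => M.pbBasic w e.X e.xv e.Y e.yv).prod * M.joint w

/-- The conditional B-semantics probability of a complex counterfactual given `Z = zv`. -/
def pbProbCond (evs : List (CFEvent ν Val)) (Z : Finset ν) (zv : Asg Val) : ℝ :=
  (∑ w : Asg Val,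
      (if ∀ i ∈ Z, w i = zv i then (evs.map fun e => M.pbBasic w e.X e.xv e.Y e.yv).prod
       else 0) * M.joint w) /
  (∑ w : Asg Val, if ∀ i ∈ Z, w i = zv i then M.joint w else 0)

/-- An assignment of values to the parents of `i`. -/
def PaAsg (i : ν) : Type := (j : {j : ν // j ∈ M.pa i}) → Val j.1

instance (i : ν) : Fintype (M.PaAsg i) := by unfold PaAsg; infer_instance
instance (i : ν) : Nonempty (M.PaAsg i) := ⟨fun j => Classical.arbitrary (Val j.1)⟩

/-- Extend an assignment of the parents of `i` to a full assignment (arbitrarily). -/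
def extendPa (i : ν) (κ : M.PaAsg i) : Asg Val :=
  fun j => if h : j ∈ M.pa i then κ ⟨j, h⟩ else Classical.arbitrary (Val j)

/-- The index type of the potential outcome variables `X_{pa_X}` of the PO-SCM:
one for each endogenous variable `X` and each value `pa_X` of its parents. -/
def POI : Type := Σ i : {i : ν // i ∉ M.exo}, M.PaAsg i.1

instance : Fintype (POI M) := by unfold POI; infer_instance

/-- The value set of the potential outcome variable `X_{pa_X}` is that of `X`. -/
def POB : POI M → Type := fun p => Val p.1.1

instance (p : POI M) : Fintype (POB M p) := by unfold POB; infer_instance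
instance (p : POI M) : Nonempty (POB M p) := by unfold POB; infer_instance

/-- The type of values of the response variable `U_X` of the canonical frame:
functions from values of the parents of `X` to values of `X`. -/
def RType (i : ν) : Type := M.PaAsg i → Val i

instance (i : ν) : Fintype (M.RType i) := by unfold RType; infer_instance
instance (i : ν) : Nonempty (M.RType i) := ⟨fun _ => Classical.arbitrary (Val i)⟩

/-- The index type of the response variables of the canonical frame:
one for each endogenous variable. -/
def RVI : Type := {i : ν // i ∉ M.exo}

instance : Fintype (RVI M) := by unfold RVI; infer_instance

/-- The value set of the response variable `U_X`. -/
def RB : RVI M → Type := fun p => M.RType p.1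

instance (p : RVI M) : Fintype (RB M p) := by unfold RB; infer_instance
instance (p : RVI M) : Nonempty (RB M p) := by unfold RB; infer_instance

end CM

/-- The family of value sets of an extended signature `ν ⊕ β`. -/
def SumVal {ν β : Type} (Val : ν → Type) (B : β → Type) : ν ⊕ β → Type := fun i =>
  match i with
  | .inl j => Val j
  | .inr b => B b

section SumValInst

variable {ν β : Type} {Val : ν → Type} {B : β → Type}

instance [∀ i, Fintype (Val i)] [∀ b, Fintype (B b)] (i : ν ⊕ β) :
    Fintype (SumVal Val B i) := by
  cases i with
  | inl j => exact inferInstanceAs (Fintype (Val j))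
  | inr b => exact inferInstanceAs (Fintype (B b))

instance [∀ i, Nonempty (Val i)] [∀ b, Nonempty (B b)] (i : ν ⊕ β) :
    Nonempty (SumVal Val B i) := by
  cases i with
  | inl j => exact inferInstanceAs (Nonempty (Val j))
  | inr b => exact inferInstanceAs (Nonempty (B b))

/-- Lift an assignment on `ν` to one on `ν ⊕ β` (arbitrary on the new variables). -/
def liftAsg [∀ b, Nonempty (B b)] (xv : Asg Val) : Asg (SumVal Val B) := fun i =>
  match i with
  | .inl j => xv j
  | .inr b => Classical.arbitrary (B b)

/-- Lift a counterfactual event on the original variables to the extended signature. -/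
def liftCFEvent [∀ b, Nonempty (B b)] (e : CFEvent ν Val) : CFEvent (ν ⊕ β) (SumVal Val B) :=
  ⟨e.X.image Sum.inl, liftAsg e.xv, e.Y.image Sum.inl, liftAsg e.yv⟩

variable [Fintype ν] [Fintype β] [∀ i, Fintype (Val i)] [∀ b, Fintype (B b)]
  [∀ i, Nonempty (Val i)] [∀ b, Nonempty (B b)]

/-- The probability, computed in a model `N` over an extended signature, of a complex
counterfactual over the original variables. -/
def extProb (N : CM (ν ⊕ β) (SumVal Val B)) (evs : List (CFEvent ν Val)) : ℝ :=
  N.cfProb (evs.map liftCFEvent)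

/-- The probability, computed in a model `N` over an extended signature, of a complex
counterfactual over the original variables, conditional on an actual event `Z = zv`
over the original variables. -/
def extProbCond (N : CM (ν ⊕ β) (SumVal Val B)) (evs : List (CFEvent ν Val))
    (Z : Finset ν) (zv : Asg Val) : ℝ :=
  N.cfProbCond (evs.map liftCFEvent) (Z.image Sum.inl) (liftAsg zv)

/-- The probability, computed in a model `N` over an extended signature, of a basic
counterfactual conditional on the values `a` of *all* the original variables
(marginalizing over the added exogenous variables), via the law of total probability. -/
def extBasicCond (N : CM (ν ⊕ β) (SumVal Val B)) (a : Asg Val)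
    (X : Finset ν) (xv : Asg Val) (Y : Finset ν) (yv : Asg Val) : ℝ :=
  (∑ w : Asg (SumVal Val B),
      if ∀ i : ν, w (Sum.inl i) = a i then
        N.cfBasic (X.image Sum.inl) (liftAsg xv) (Y.image Sum.inl) (liftAsg yv) w * N.joint w
      else 0) /
  (∑ w : Asg (SumVal Val B), if ∀ i : ν, w (Sum.inl i) = a i then N.joint w else 0)

end SumValInst

namespace CM

variable {ν : Type} {Val : ν → Type} [Fintype ν] [∀ i, Fintype (Val i)] [∀ i, Nonempty (Val i)]
variable (M : CM ν Val)

/-- The PO-SCM `M^N` of `M`: the structural causal model obtained from `M` by adding,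
for each endogenous variable `X` and each value `pa_X` of its parents, an exogenous
potential outcome variable `X_{pa_X}` (with marginal `P_M(X | Pa_X = pa_X)`, all
exogenous variables mutually independent), and the structural equation
`X = X_{pa_X}` whenever `Pa_X = pa_X`. -/
def MN : CM (ν ⊕ POI M) (SumVal Val (POB M)) where
  exo := (M.exo.image Sum.inl) ∪ (univ.image Sum.inr)
  pa := fun i =>
    match i with
    | .inl j => ((M.pa j).image Sum.inl) ∪
        ((univ.filter fun p : POI M => p.1.1 = j).image Sum.inr)
    | .inr _ => ∅
  ord := fun i =>
    match i with
    | .inl j => M.ord j + 1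
    | .inr _ => 0
  cpt := fun i =>
    match i with
    | .inl j => fun w x =>
        if h : j ∈ M.exo then M.cpt j (fun k => w (Sum.inl k)) x
        else if x = w (Sum.inr ⟨⟨j, h⟩, fun k => w (Sum.inl k.1)⟩) then 1 else 0
    | .inr p => fun _ x => M.cpt p.1.1 (M.extendPa p.1.1 p.2) x

/-- `P^N(y_x, …, z_w)`: the probability of a complex counterfactual computed in the
PO-SCM `M^N`. -/
def pnProb (evs : List (CFEvent ν Val)) : ℝ := extProb M.MN evs

/-- `P^N(y_x, …, z_w | Z = zv)`: the conditional probability of a complex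
counterfactual computed in the PO-SCM `M^N`, given an actual event on the
endogenous variables. -/
def pnProbCond (evs : List (CFEvent ν Val)) (Z : Finset ν) (zv : Asg Val) : ℝ :=
  extProbCond M.MN evs Z zv

/-- `P^N((Y = yv)_{X ← xv} | U = u, V = v)`: the probability of a basic counterfactual
computed in the PO-SCM `M^N`, conditional on the exogenous and endogenous variables of
`M` only (marginalizing over the potential outcome variables). -/
def pnBasicCond (a : Asg Val) (X : Finset ν) (xv : Asg Val) (Y : Finset ν) (yv : Asg Val) : ℝ :=
  extBasicCond M.MN a X xv Y yv

/-- A canonical SCM for `M`, determined by a distribution `q` of the response variables: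
the SCM over the canonical frame, which adds for each endogenous variable `X` an
exogenous response variable `U_X` ranging over the functions `f_X : R(Pa_X) → R(X)`,
with the structural equation `X = f_X(Pa_X)` where `f_X` is the value of `U_X`. -/
def canonSCM (q : (p : RVI M) → RType M p.1 → ℝ) : CM (ν ⊕ RVI M) (SumVal Val (RB M)) where
  exo := (M.exo.image Sum.inl) ∪ (univ.image Sum.inr)
  pa := fun i =>
    match i with
    | .inl j => ((M.pa j).image Sum.inl) ∪
        ((univ.filter fun p : RVI M => p.1 = j).image Sum.inr)
    | .inr _ => ∅
  ord := fun i =>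
    match i with
    | .inl j => M.ord j + 1
    | .inr _ => 0
  cpt := fun i =>
    match i with
    | .inl j => fun w x =>
        if h : j ∈ M.exo then M.cpt j (fun k => w (Sum.inl k)) x
        else if x = w (Sum.inr ⟨j, h⟩) (fun k => w (Sum.inl k.1)) then 1 else 0
    | .inr p => fun _ x => q p x

/-- `q` is the distribution of the response variables of a canonical SCM for `M`:
it is a probability distribution (the response variables being mutually independent and
independent of the exogenous variables of `M`, whose distribution is kept), and it
reproduces the conditional probability tables of `M`:
`P_M(X = x | Pa_X = pa_X) = Σ_{f_X with f_X(pa_X) = x} P(U_X = f_X)`. -/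
def IsCanonicalDist (q : (p : RVI M) → RType M p.1 → ℝ) : Prop :=
  (∀ p x, 0 ≤ q p x) ∧ (∀ p, ∑ f, q p f = 1) ∧
  ∀ (p : RVI M) (κ : M.PaAsg p.1) (x : Val p.1),
    M.cpt p.1 (M.extendPa p.1 κ) x = ∑ f ∈ univ.filter (fun f : RType M p.1 => f κ = x), q p f

/-- The distribution of the response variables of the GH-SCM:
`P(U_X = f_X) = ∏_{pa_X} P_M(X = f_X(pa_X) | Pa_X = pa_X)`. -/
def qGH : (p : RVI M) → RType M p.1 → ℝ := fun p f =>
  ∏ κ : M.PaAsg p.1, M.cpt p.1 (M.extendPa p.1 κ) (f κ)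

end CM

/-- A default assignment. -/
def dfltAsg {ν : Type} (Val : ν → Type) [∀ i, Nonempty (Val i)] : Asg Val :=
  fun i => Classical.arbitrary (Val i)

section ProductWeights

variable {ι R : Type*} {α : ι → Type*} [CommSemiring R]

/-- The weights `q` of independent coordinates, conditioned on the coordinates in `A` taking
the values `c`: the weight of each coordinate in `A` becomes a point mass. -/
def condWeight (q : ∀ p, α p → R) (A : Finset ι) (c : ∀ p, α p) : ∀ p, α p → R :=
  A.piecewise (fun p => Pi.single (c p) 1) q

lemma condWeight_of_mem {A : Finset ι} {p : ι} (hp : p ∈ A) (q : ∀ p, α p → R) (c : ∀ p, α p)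
    (x : α p) : condWeight q A c p x = if x = c p then 1 else 0 := by
  rw [condWeight, piecewise_eq_of_mem _ _ _ hp, Pi.single_apply]

lemma condWeight_of_notMem {A : Finset ι} {p : ι} (hp : p ∉ A) (q : ∀ p, α p → R)
    (c : ∀ p, α p) (x : α p) : condWeight q A c p x = q p x := by
  rw [condWeight, piecewise_eq_of_notMem _ _ _ hp]

lemma sum_condWeight_eq_one [∀ p, Fintype (α p)] {q : ∀ p, α p → R} (hq : ∀ p, ∑ x, q p x = 1)
    (A : Finset ι) (c : ∀ p, α p) (p : ι) : ∑ x, condWeight q A c p x = 1 := by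
  by_cases hp : p ∈ A
  · simp only [condWeight_of_mem hp, sum_ite_eq', mem_univ, if_true]
  · simp only [condWeight_of_notMem hp, hq]

variable [Fintype ι]

lemma ite_prod_eq_prod_mul_prod_condWeight (q : ∀ p, α p → R) (A : Finset ι) (c r : ∀ p, α p) :
    (if ∀ p ∈ A, r p = c p then ∏ p, q p (r p) else 0) =
      (∏ p ∈ A, q p (c p)) * ∏ p, condWeight q A c p (r p) := by
  have hin : ∏ p ∈ A, condWeight q A c p (r p) = if ∀ p ∈ A, r p = c p then 1 else 0 :=
    calc ∏ p ∈ A, condWeight q A c p (r p)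
      _ = ∏ p ∈ A, if r p = c p then 1 else 0 :=
          prod_congr rfl fun p hp => condWeight_of_mem hp _ _ _
      _ = if ∀ p ∈ A, r p = c p then 1 else 0 := by simp only [prod_ite_zero, prod_const_one]
  have hout : ∏ p ∈ Aᶜ, condWeight q A c p (r p) = ∏ p ∈ Aᶜ, q p (r p) :=
    prod_congr rfl fun p hp => condWeight_of_notMem (mem_compl.1 hp) _ _ _
  rw [← prod_mul_prod_compl A fun p => condWeight q A c p (r p), hin, hout]
  split_ifs with h
  · rw [one_mul, ← prod_mul_prod_compl A, prod_congr rfl fun p hp => by rw [h p hp]]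
  · rw [zero_mul, mul_zero]

variable [∀ p, Fintype (α p)] {q : ∀ p, α p → R}

lemma sum_ite_prod_eq_prod (hq : ∀ p, ∑ x, q p x = 1) (B : Finset ι) (d : ∀ p, α p) :
    (∑ r : ∀ p, α p, if ∀ p ∈ B, r p = d p then ∏ p, q p (r p) else 0) = ∏ p ∈ B, q p (d p) :=
  calc (∑ r : ∀ p, α p, if ∀ p ∈ B, r p = d p then ∏ p, q p (r p) else 0)
    _ = ∑ r : ∀ p, α p, ∏ p, if p ∈ B → r p = d p then q p (r p) else 0 := by
        simp only [prod_ite_zero, mem_univ, true_imp_iff]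
    _ = ∏ p, ∑ x, if p ∈ B → x = d p then q p x else 0 :=
        (Fintype.prod_sum fun p x => if p ∈ B → x = d p then q p x else 0).symm
    _ = ∏ p, if p ∈ B then q p (d p) else 1 := by
        refine prod_congr rfl fun p _ => ?_
        by_cases hp : p ∈ B <;> simp [hp, hq]
    _ = ∏ p ∈ B, q p (d p) := Fintype.prod_ite_mem B fun p => q p (d p)

lemma sum_ite_and_prod_eq_mul (hq : ∀ p, ∑ x, q p x = 1) (A B : Finset ι) (c d : ∀ p, α p) :
    (∑ r : ∀ p, α p,
      if (∀ p ∈ A, r p = c p) ∧ ∀ p ∈ B, r p = d p then ∏ p, q p (r p) else 0) =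
      (∏ p ∈ A, q p (c p)) * ∏ p ∈ B, condWeight q A c p (d p) := by
  rw [← sum_ite_prod_eq_prod (sum_condWeight_eq_one hq A c) B d, mul_sum]
  refine sum_congr rfl fun r _ => ?_
  rw [mul_ite, mul_zero, ← ite_prod_eq_prod_mul_prod_condWeight, ← ite_and]
  simp only [and_comm]

end ProductWeights

section JoinAsg

variable {ν β : Type} {Val : ν → Type} {B : β → Type}

/-- The assignment of the extended signature with components `a` and `r`. -/
def joinAsg (a : Asg Val) (r : Asg B) : Asg (SumVal Val B) := fun i =>
  match i with
  | .inl j => a j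
  | .inr b => r b

/-- Assignments of the extended signature as pairs of assignments. -/
def joinAsgEquiv : Asg Val × Asg B ≃ Asg (SumVal Val B) where
  toFun q := joinAsg q.1 q.2
  invFun w := (fun j => w (Sum.inl j), fun b => w (Sum.inr b))
  left_inv _ := rfl
  right_inv w := by funext i; cases i <;> rfl

lemma forall_image_inl_joinAsg_eq_liftAsg [∀ b, Nonempty (B b)] (Z : Finset ν)
    (zv a : Asg Val) (r : Asg B) :
    (∀ i ∈ Z.image (Sum.inl : ν → ν ⊕ β), joinAsg a r i = liftAsg zv i) ↔
      ∀ i ∈ Z, a i = zv i :=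
  forall_mem_image

variable [Fintype ν] [Fintype β] [∀ i, Fintype (Val i)] [∀ b, Fintype (B b)]

-- The `Fintype` instance is left to unification: the decidable equality found for `ν ⊕ β` differs
-- from the one that definitions over a general index type carry.
lemma sum_joinAsg {R : Type*} [AddCommMonoid R] {_ : Fintype (Asg (SumVal Val B))}
    (f : Asg (SumVal Val B) → R) : ∑ w, f w = ∑ a : Asg Val, ∑ r : Asg B, f (joinAsg a r) := by
  rw [← joinAsgEquiv.sum_comp, Fintype.sum_prod_type]
  rfl

lemma sum_ite_liftAsg {R : Type*} [AddCommMonoid R] {_ : Fintype (Asg (SumVal Val B))}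
    [∀ b, Nonempty (B b)] (Z : Finset ν) (zv : Asg Val)
    {_ : DecidablePred fun w : Asg (SumVal Val B) => ∀ i ∈ Z.image Sum.inl, w i = liftAsg zv i}
    (f : Asg (SumVal Val B) → R) :
    (∑ w : Asg (SumVal Val B), if ∀ i ∈ Z.image Sum.inl, w i = liftAsg zv i then f w else 0) =
      ∑ a : Asg Val, if ∀ i ∈ Z, a i = zv i then ∑ r : Asg B, f (joinAsg a r) else 0 := by
  rw [sum_joinAsg]
  refine sum_congr rfl fun a _ => ?_
  simp only [forall_image_inl_joinAsg_eq_liftAsg]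
  split_ifs
  · rfl
  · exact sum_const_zero

end JoinAsg

namespace CM

section ExogenousCondition

variable {ν : Type} {Val : ν → Type} [Fintype ν]

/-- `P(U = u)`, where `u` is the exogenous part of `w`. -/
def exoProb (M : CM ν Val) (w : Asg Val) : ℝ := ∏ i ∈ M.exo, M.cpt i w (w i)

/-- `P_{do(S = xv)}(w | U = u)`, where `u` is the exogenous part of `a`. Exogenous variables
are roots, so conditioning on them is encoded as intervening on them. -/
def pdoGivenExo (M : CM ν Val) (S : Finset ν) (xv a w : Asg Val) : ℝ :=
  M.pdo (M.exo ∪ S) (M.exo.piecewise a xv) w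

variable {M : CM ν Val}

lemma joint_eq_exoProb_mul (a : Asg Val) :
    M.joint a = M.exoProb a * ∏ i ∈ M.exoᶜ, M.cpt i a (a i) :=
  (prod_mul_prod_compl M.exo _).symm

lemma pdoGivenExo_eq_ite {S : Finset ν} (hS : Disjoint M.exo S) (xv a w : Asg Val) :
    M.pdoGivenExo S xv a w =
      if (∀ i ∈ M.exo, w i = a i) ∧ ∀ i ∈ S, w i = xv i
      then ∏ i ∈ (M.exo ∪ S)ᶜ, M.cpt i w (w i) else 0 := by
  refine if_congr ?_ rfl rfl
  rw [forall_mem_union]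
  refine and_congr (forall₂_congr fun i hi => ?_) (forall₂_congr fun i hi => ?_)
  · rw [piecewise_eq_of_mem _ _ _ hi]
  · rw [piecewise_eq_of_notMem _ _ _ (disjoint_right.1 hS hi)]

variable [∀ i, Fintype (Val i)]

lemma WF.exoProb_congr (hM : M.WF) {a w : Asg Val} (h : ∀ i ∈ M.exo, w i = a i) :
    M.exoProb w = M.exoProb a := by
  refine prod_congr rfl fun i hi => ?_
  rw [h i hi]
  exact hM.cpt_pa i w a _ (by simp [hM.pa_exo i hi])

lemma WF.pdo_eq_sum_pdo_insert (hM : M.WF) {S : Finset ν} {i : ν} (hi : i ∉ S)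
    (hpa : M.pa i ⊆ S) (a w : Asg Val) :
    M.pdo S a w = ∑ x, M.cpt i a x * M.pdo (insert i S) (Function.update a i x) w := by
  have hcond : ∀ x, (∀ j ∈ insert i S, w j = Function.update a i x j) ↔
      w i = x ∧ ∀ j ∈ S, w j = a j := by
    intro x
    rw [forall_mem_insert, Function.update_self]
    refine and_congr_right fun _ => forall₂_congr fun j hj => ?_
    rw [Function.update_of_ne (ne_of_mem_of_not_mem hj hi)]
  simp only [pdo, hcond, ite_and, mul_ite, mul_zero, sum_ite_eq, mem_univ, if_true]
  split_ifs with hw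
  · rw [compl_insert, ← mul_prod_erase _ _ (mem_compl.2 hi),
      hM.cpt_pa i w a _ fun j hj => hw j (hpa hj)]
  · rfl

/-- The induction intervenes on one more variable at a time, always one of minimal rank, so
that its parents already have known values. -/
lemma WF.sum_pdo_eq_one (hM : M.WF) (S : Finset ν) (a : Asg Val) : ∑ w, M.pdo S a w = 1 := by
  induction hn : #Sᶜ generalizing S a with
  | zero =>
    obtain rfl : S = univ := by simpa using hn
    simp [pdo, ← funext_iff]
  | succ n ih =>
    obtain ⟨i, hi, hmin⟩ := exists_min_image Sᶜ M.ord (card_pos.1 (by omega))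
    have hiS : i ∉ S := mem_compl.1 hi
    have hpa : M.pa i ⊆ S := fun j hj => by
      by_contra hjS
      exact (hM.acyclic i j hj).not_ge (hmin j (mem_compl.2 hjS))
    have hcard : #(insert i S)ᶜ = n := by
      rw [compl_insert, card_erase_of_mem hi, hn, Nat.add_sub_cancel]
    calc ∑ w, M.pdo S a w
      _ = ∑ x, M.cpt i a x * ∑ w, M.pdo (insert i S) (Function.update a i x) w := by
          simp only [hM.pdo_eq_sum_pdo_insert hiS hpa a, mul_sum]
          exact sum_comm
      _ = 1 := by simp only [ih _ _ hcard, mul_one, hM.cpt_sum]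

lemma WF.ite_pdo_eq_exoProb_mul (hM : M.WF) {S : Finset ν} (hS : Disjoint M.exo S)
    (xv a w : Asg Val) :
    (if ∀ i ∈ M.exo, w i = a i then M.pdo S xv w else 0) =
      M.exoProb a * M.pdoGivenExo S xv a w := by
  simp only [pdoGivenExo_eq_ite hS, pdo, ite_and, mul_ite, mul_zero]
  split_ifs with hw
  · rw [← hM.exoProb_congr hw, exoProb, ← prod_sdiff (subset_compl_iff_disjoint_right.2 hS),
      mul_comm, compl_union, inter_comm, sdiff_eq_inter_compl]
  all_goals rfl

lemma WF.cfBasic_eq_sum_pdoGivenExo (hM : M.WF) {S : Finset ν} (hS : Disjoint M.exo S)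
    (xv : Asg Val) (T : Finset ν) (tv : Asg Val) {a : Asg Val} (ha : M.exoProb a ≠ 0) :
    M.cfBasic S xv T tv a =
      ∑ w : Asg Val, if ∀ i ∈ T, w i = tv i then M.pdoGivenExo S xv a w else 0 := by
  have hden : (∑ w : Asg Val, if ∀ i ∈ M.exo, w i = a i then M.pdo S xv w else 0) =
      M.exoProb a := by
    simp only [hM.ite_pdo_eq_exoProb_mul hS, ← mul_sum, pdoGivenExo, hM.sum_pdo_eq_one, mul_one]
  rw [cfBasic, hden, div_eq_iff ha, mul_comm, mul_sum]
  refine sum_congr rfl fun w _ => ?_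
  rw [mul_ite, mul_zero, ← hM.ite_pdo_eq_exoProb_mul hS, ← ite_and]
  simp only [and_comm]

end ExogenousCondition

section ParentValues

variable {ν : Type} {Val : ν → Type} (M : CM ν Val)

/-- The values that `a` gives to the parents of `i`. -/
def restrictPa (i : ν) (a : Asg Val) : M.PaAsg i := fun j => a j.1

lemma restrictPa_eq_iff {i : ν} {a w : Asg Val} :
    M.restrictPa i w = M.restrictPa i a ↔ ∀ j ∈ M.pa i, w j = a j :=
  funext_iff.trans Subtype.forall

variable {M}

lemma WF.cpt_extendPa_restrictPa [Fintype ν] [∀ i, Fintype (Val i)] [∀ i, Nonempty (Val i)]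
    (hM : M.WF) (i : ν) (a : Asg Val) (x : Val i) :
    M.cpt i (M.extendPa i (M.restrictPa i a)) x = M.cpt i a x :=
  hM.cpt_pa i _ _ x fun j hj => by simp [extendPa, restrictPa, hj]

end ParentValues

section Refinement

variable {ν : Type} {Val : ν → Type} [Fintype ν] {M : CM ν Val}

lemma refine_exoProb (a w : Asg Val) : (M.refine a).exoProb w = M.exoProb w :=
  prod_congr rfl fun _ hi => if_neg fun h => h.1 hi

variable [∀ i, Fintype (Val i)]

lemma WF.refine (hM : M.WF) (a : Asg Val) : (M.refine a).WF where
  pa_exo := hM.pa_exo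
  acyclic := hM.acyclic
  cpt_pa i w w' x h :=
    if_congr (and_congr_right fun _ => forall₂_congr fun j hj => by rw [h j hj]) rfl
      (hM.cpt_pa i w w' x h)
  cpt_nonneg i w x := by
    simp only [CM.refine]
    split_ifs
    exacts [zero_le_one, le_rfl, hM.cpt_nonneg i w x]
  cpt_sum i w := by
    simp only [CM.refine]
    split_ifs
    exacts [by simp, hM.cpt_sum i w]

end Refinement

section PotentialOutcomes

variable {ν : Type} {Val : ν → Type} [Fintype ν] [∀ i, Fintype (Val i)] (M : CM ν Val)

/-- The potential outcome variables read off by the structural equations of the variables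
outside `S` in the world `w`. -/
def consultedPO (S : Finset ν) (w : Asg Val) : Finset (POI M) :=
  univ.filter fun p => p.1.1 ∉ S ∧ p.2 = M.restrictPa p.1.1 w

/-- The value that `w` gives to the variable of which `p` is a potential outcome. -/
def outcome (w : Asg Val) : Asg (POB M) := fun p => w p.1.1

/-- The world `w` satisfies the structural equations of the variables outside `S` when the
potential outcomes take the values `r`. -/
def Solves (S : Finset ν) (r : Asg (POB M)) (w : Asg Val) : Prop :=
  ∀ p ∈ M.consultedPO S w, r p = M.outcome w p

/-- The distribution of a potential outcome variable. -/
def poWeight [∀ i, Nonempty (Val i)] (p : POI M) (x : POB M p) : ℝ :=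
  M.cpt p.1.1 (M.extendPa p.1.1 p.2) x

variable {M}

lemma mem_consultedPO {S : Finset ν} {w : Asg Val} {p : POI M} :
    p ∈ M.consultedPO S w ↔ p.1.1 ∉ S ∧ p.2 = M.restrictPa p.1.1 w := by
  simp [consultedPO]

lemma prod_consultedPO {R : Type*} [CommMonoid R] (S : Finset ν) (w : Asg Val) (g : ν → R) :
    ∏ p ∈ M.consultedPO S w, g p.1.1 = ∏ i ∈ (M.exo ∪ S)ᶜ, g i := by
  refine prod_nbij (fun p => p.1.1) ?_ ?_ ?_ fun _ _ => rfl
  · intro p hp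
    simpa [p.1.2] using (mem_consultedPO.1 hp).1
  · rintro ⟨⟨i, hi⟩, κ⟩ hp ⟨⟨j, hj⟩, κ'⟩ hp' (rfl : i = j)
    obtain rfl : κ = M.restrictPa i w := (mem_consultedPO.1 hp).2
    obtain rfl : κ' = M.restrictPa i w := (mem_consultedPO.1 hp').2
    rfl
  · intro i hi
    have hi' : i ∉ M.exo ∧ i ∉ S := by simpa using hi
    exact ⟨⟨⟨i, hi'.1⟩, M.restrictPa i w⟩, mem_consultedPO.2 ⟨hi'.2, rfl⟩, rfl⟩

variable [∀ i, Nonempty (Val i)]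

lemma WF.sum_poWeight (hM : M.WF) (p : POI M) : ∑ x, M.poWeight p x = 1 :=
  hM.cpt_sum _ _

lemma WF.poWeight_of_mem_consultedPO (hM : M.WF) {S : Finset ν} {w : Asg Val} {p : POI M}
    (hp : p ∈ M.consultedPO S w) (x : Val p.1.1) : M.poWeight p x = M.cpt p.1.1 w x :=
  (congrArg (fun κ => M.cpt p.1.1 (M.extendPa p.1.1 κ) x) (mem_consultedPO.1 hp).2).trans
    (hM.cpt_extendPa_restrictPa p.1.1 w x)

lemma WF.prod_consultedPO_poWeight (hM : M.WF) (S : Finset ν) (w : Asg Val) :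
    ∏ p ∈ M.consultedPO S w, M.poWeight p (M.outcome w p) =
      ∏ i ∈ (M.exo ∪ S)ᶜ, M.cpt i w (w i) := by
  rw [← prod_consultedPO S w]
  exact prod_congr rfl fun p hp => hM.poWeight_of_mem_consultedPO hp _

/-- Conditioning on the actual world is the passage to the refinement. -/
lemma WF.prod_consultedPO_condWeight (hM : M.WF) (S : Finset ν) (a w : Asg Val) :
    ∏ p ∈ M.consultedPO S w,
        condWeight M.poWeight (M.consultedPO ∅ a) (M.outcome a) p (M.outcome w p) =
      ∏ i ∈ (M.exo ∪ S)ᶜ, (M.refine a).cpt i w (w i) := by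
  rw [← prod_consultedPO S w]
  refine prod_congr rfl fun p hp => ?_
  have hmem : p ∈ M.consultedPO ∅ a ↔ ∀ j ∈ M.pa p.1.1, w j = a j := by
    rw [mem_consultedPO, (mem_consultedPO.1 hp).2, restrictPa_eq_iff]
    simp
  by_cases h : ∀ j ∈ M.pa p.1.1, w j = a j
  · exact (condWeight_of_mem (hmem.2 h) _ _ _).trans (if_pos ⟨p.1.2, h⟩).symm
  · exact (condWeight_of_notMem (mt hmem.1 h) _ _ _).trans <|
      (hM.poWeight_of_mem_consultedPO hp _).trans (if_neg fun h' => h h'.2).symm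

lemma WF.sum_ite_solves (hM : M.WF) (S : Finset ν) (w : Asg Val) :
    (∑ r, if M.Solves S r w then ∏ p, M.poWeight p (r p) else 0) =
      ∏ i ∈ (M.exo ∪ S)ᶜ, M.cpt i w (w i) := by
  rw [← hM.prod_consultedPO_poWeight]
  convert sum_ite_prod_eq_prod hM.sum_poWeight (M.consultedPO S w) (M.outcome w) using 3
  exact Iff.rfl

lemma WF.sum_ite_solves_and_solves (hM : M.WF) (S : Finset ν) (a w : Asg Val) :
    (∑ r, if M.Solves ∅ r a ∧ M.Solves S r w then ∏ p, M.poWeight p (r p) else 0) =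
      (∏ i ∈ M.exoᶜ, M.cpt i a (a i)) * ∏ i ∈ (M.exo ∪ S)ᶜ, (M.refine a).cpt i w (w i) := by
  have h := hM.prod_consultedPO_poWeight ∅ a
  rw [union_empty] at h
  rw [← h, ← hM.prod_consultedPO_condWeight]
  convert sum_ite_and_prod_eq_mul hM.sum_poWeight (M.consultedPO ∅ a) (M.consultedPO S w)
    (M.outcome a) (M.outcome w) using 3
  exact Iff.rfl

end PotentialOutcomes

section POSCM

variable {ν : Type} {Val : ν → Type} [Fintype ν] [∀ i, Fintype (Val i)] [∀ i, Nonempty (Val i)]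
  {M : CM ν Val}

lemma MN_cpt_inl_of_mem_exo {i : ν} (hi : i ∈ M.exo) (w : Asg Val) (r : Asg (POB M)) (x : Val i) :
    M.MN.cpt (Sum.inl i) (joinAsg w r) x = M.cpt i w x :=
  dif_pos hi

lemma MN_cpt_inl_of_notMem_exo {i : ν} (hi : i ∉ M.exo) (w : Asg Val) (r : Asg (POB M))
    (x : Val i) :
    M.MN.cpt (Sum.inl i) (joinAsg w r) x =
      if x = r ⟨⟨i, hi⟩, M.restrictPa i w⟩ then 1 else 0 :=
  dif_neg hi

lemma WF.MN_cpt_inl_congr (hM : M.WF) (i : ν) (w w' : Asg (SumVal Val (POB M))) (x : Val i)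
    (h : ∀ j ∈ M.MN.pa (Sum.inl i), w j = w' j) :
    M.MN.cpt (Sum.inl i) w x = M.MN.cpt (Sum.inl i) w' x := by
  obtain ⟨⟨w, r⟩, rfl⟩ := joinAsgEquiv.surjective w
  obtain ⟨⟨w', r'⟩, rfl⟩ := joinAsgEquiv.surjective w'
  have hw : ∀ j ∈ M.pa i, w j = w' j := fun j hj =>
    h (Sum.inl j) (mem_union_left _ (mem_image_of_mem _ hj))
  have hr : ∀ p : POI M, p.1.1 = i → r p = r' p := fun p hp =>
    h (Sum.inr p) (mem_union_right _ (mem_image_of_mem _ (mem_filter.2 ⟨mem_univ p, hp⟩)))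
  by_cases hi : i ∈ M.exo
  · exact (MN_cpt_inl_of_mem_exo hi w r x).trans
      ((hM.cpt_pa i w w' x hw).trans (MN_cpt_inl_of_mem_exo hi w' r' x).symm)
  · have hout : r ⟨⟨i, hi⟩, M.restrictPa i w⟩ = r' ⟨⟨i, hi⟩, M.restrictPa i w'⟩ := by
      rw [M.restrictPa_eq_iff.2 hw]
      exact hr _ rfl
    exact (MN_cpt_inl_of_notMem_exo hi w r x).trans
      ((if_congr (by rw [hout]) rfl rfl).trans (MN_cpt_inl_of_notMem_exo hi w' r' x).symm)

lemma WF.MN (hM : M.WF) : M.MN.WF where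
  pa_exo := by
    simp only [CM.MN, forall_mem_union, forall_mem_image]
    refine ⟨fun i hi => ?_, fun _ _ => trivial⟩
    simp only [hM.pa_exo i hi, image_empty, empty_union, image_eq_empty, filter_eq_empty_iff]
    rintro p - rfl
    exact p.1.2 hi
  acyclic := by
    rintro (i | p) j hj
    · simp only [CM.MN, mem_union, mem_image, mem_filter] at hj ⊢
      obtain ⟨k, hk, rfl⟩ | ⟨p, -, rfl⟩ := hj
      · exact Nat.succ_lt_succ (hM.acyclic i k hk)
      · exact Nat.succ_pos _
    · exact absurd hj (notMem_empty j)
  cpt_pa := by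
    rintro (i | p) w w' x h
    · exact hM.MN_cpt_inl_congr i w w' x h
    · rfl
  cpt_nonneg := by
    rintro (i | p) w x
    · simp only [CM.MN]
      split_ifs
      exacts [hM.cpt_nonneg _ _ _, zero_le_one, le_rfl]
    · exact hM.cpt_nonneg _ _ _
  cpt_sum := by
    rintro (i | p) w
    · by_cases hi : i ∈ M.exo
      · simp only [CM.MN, dif_pos hi]
        exact hM.cpt_sum i _
      · simp only [CM.MN, dif_neg hi]
        exact Fintype.sum_ite_eq' _ _
    · exact hM.cpt_sum _ _

lemma MN_exoProb (a : Asg Val) (r : Asg (POB M)) :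
    M.MN.exoProb (joinAsg a r) = M.exoProb a * ∏ p, M.poWeight p (r p) := by
  have hdisj : Disjoint (M.exo.image Sum.inl) (univ.image (Sum.inr : POI M → ν ⊕ POI M)) := by
    simp [disjoint_left]
  calc M.MN.exoProb (joinAsg a r)
    _ = (∏ i ∈ M.exo.image Sum.inl, M.MN.cpt i (joinAsg a r) (joinAsg a r i)) *
          ∏ i ∈ univ.image Sum.inr, M.MN.cpt i (joinAsg a r) (joinAsg a r i) := prod_union hdisj
    _ = M.exoProb a * ∏ p, M.poWeight p (r p) := by
      rw [prod_image Sum.inl_injective.injOn, prod_image Sum.inr_injective.injOn]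
      congr 1
      exact prod_congr rfl fun i hi => MN_cpt_inl_of_mem_exo hi a r (a i)

lemma prod_MN_cpt (S : Finset ν) (w : Asg Val) (r : Asg (POB M)) :
    ∏ i ∈ (M.MN.exo ∪ S.image Sum.inl)ᶜ, M.MN.cpt i (joinAsg w r) (joinAsg w r i) =
      if M.Solves S r w then 1 else 0 := by
  have hcompl : (M.MN.exo ∪ S.image Sum.inl)ᶜ = (M.exo ∪ S)ᶜ.image Sum.inl := by
    ext (i | p) <;> simp [CM.MN]
  have hread : ∀ p ∈ M.consultedPO S w, M.MN.cpt (Sum.inl p.1.1) (joinAsg w r) (w p.1.1) =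
      if r p = M.outcome w p then 1 else 0 := by
    rintro ⟨⟨i, hi⟩, κ⟩ hp
    obtain rfl : κ = M.restrictPa i w := (mem_consultedPO.1 hp).2
    exact (MN_cpt_inl_of_notMem_exo hi w r (w i)).trans (if_congr eq_comm rfl rfl)
  calc ∏ i ∈ (M.MN.exo ∪ S.image Sum.inl)ᶜ, M.MN.cpt i (joinAsg w r) (joinAsg w r i)
    _ = ∏ i ∈ (M.exo ∪ S)ᶜ, M.MN.cpt (Sum.inl i) (joinAsg w r) (w i) := by
        rw [hcompl, prod_image Sum.inl_injective.injOn]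
        rfl
    _ = ∏ p ∈ M.consultedPO S w, if r p = M.outcome w p then 1 else 0 := by
        rw [← prod_consultedPO S w, prod_congr rfl hread]
    _ = if M.Solves S r w then 1 else 0 := by
        simp only [prod_ite_zero, prod_const_one]
        exact if_congr Iff.rfl rfl rfl

lemma MN_joint (a : Asg Val) (r : Asg (POB M)) :
    M.MN.joint (joinAsg a r) =
      if M.Solves ∅ r a then M.MN.exoProb (joinAsg a r) else 0 := by
  have h := prod_MN_cpt ∅ a r
  rw [image_empty, union_empty] at h
  rw [joint_eq_exoProb_mul, ← mul_boole]
  congr 1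
  convert h

lemma WF.sum_MN_joint (hM : M.WF) (a : Asg Val) :
    ∑ r, M.MN.joint (joinAsg a r) = M.joint a := by
  simp only [MN_joint, MN_exoProb, ← mul_ite_zero, ← mul_sum, hM.sum_ite_solves, union_empty,
    joint_eq_exoProb_mul a]

lemma disjoint_MN_exo_image_inl {S : Finset ν} (hS : Disjoint M.exo S) :
    Disjoint M.MN.exo (S.image Sum.inl) := by
  simpa [CM.MN, disjoint_left] using fun i hi hiS => disjoint_left.1 hS hi hiS

lemma MN_pdoGivenExo {S : Finset ν} (hS : Disjoint M.exo S) (xv a w : Asg Val)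
    (r s : Asg (POB M)) :
    M.MN.pdoGivenExo (S.image Sum.inl) (liftAsg xv) (joinAsg a r) (joinAsg w s) =
      if s = r then
        if ((∀ i ∈ M.exo, w i = a i) ∧ ∀ i ∈ S, w i = xv i) ∧ M.Solves S r w then 1 else 0
      else 0 := by
  have hcond : ((∀ i ∈ M.MN.exo, joinAsg w s i = joinAsg a r i) ∧
      ∀ i ∈ S.image Sum.inl, joinAsg w s i = liftAsg xv i) ↔
      s = r ∧ (∀ i ∈ M.exo, w i = a i) ∧ ∀ i ∈ S, w i = xv i := by
    simp only [CM.MN, forall_mem_union, forall_mem_image, mem_univ, true_imp_iff]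
    rw [funext_iff, ← and_assoc, and_comm (a := ∀ p, s p = r p)]
    rfl
  rw [pdoGivenExo_eq_ite (disjoint_MN_exo_image_inl hS)]
  simp only [hcond, ite_and]
  congr! 3 with hsr
  subst hsr
  convert prod_MN_cpt S w s

lemma WF.MN_cfBasic_mul_joint (hM : M.WF) {S : Finset ν} (hS : Disjoint M.exo S) (xv : Asg Val)
    (T : Finset ν) (tv a : Asg Val) (r : Asg (POB M)) :
    M.MN.cfBasic (S.image Sum.inl) (liftAsg xv) (T.image Sum.inl) (liftAsg tv) (joinAsg a r) *
        M.MN.joint (joinAsg a r) =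
      ∑ w : Asg Val, if ∀ i ∈ T, w i = tv i then
        if (∀ i ∈ M.exo, w i = a i) ∧ ∀ i ∈ S, w i = xv i then
          if M.Solves ∅ r a ∧ M.Solves S r w then M.MN.exoProb (joinAsg a r) else 0
        else 0
      else 0 := by
  by_cases h : M.MN.exoProb (joinAsg a r) = 0
  · simp only [MN_joint, h, ite_self, sum_const_zero, mul_zero]
  have hcf : M.MN.cfBasic (S.image Sum.inl) (liftAsg xv) (T.image Sum.inl) (liftAsg tv)
      (joinAsg a r) = ∑ w : Asg Val, if ∀ i ∈ T, w i = tv i then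
        if ((∀ i ∈ M.exo, w i = a i) ∧ ∀ i ∈ S, w i = xv i) ∧ M.Solves S r w then 1 else 0
      else 0 := by
    rw [hM.MN.cfBasic_eq_sum_pdoGivenExo (disjoint_MN_exo_image_inl hS) _ _ _ h]
    refine (sum_ite_liftAsg T tv _).trans (sum_congr rfl fun w _ => ?_)
    simp only [MN_pdoGivenExo hS, Fintype.sum_ite_eq']
  rw [hcf, MN_joint, sum_mul]
  refine sum_congr rfl fun w _ => ?_
  by_cases ha : M.Solves ∅ r a <;>
    simp only [ha, ite_and, ite_mul, one_mul, zero_mul, mul_zero, if_true, if_false, ite_self]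

lemma WF.sum_ite_solves_and_solves_exoProb (hM : M.WF) (S : Finset ν) (a w : Asg Val) :
    (∑ r, if M.Solves ∅ r a ∧ M.Solves S r w then M.MN.exoProb (joinAsg a r) else 0) =
      M.joint a * ∏ i ∈ (M.exo ∪ S)ᶜ, (M.refine a).cpt i w (w i) := by
  simp only [MN_exoProb, ← mul_ite_zero, ← mul_sum, hM.sum_ite_solves_and_solves,
    joint_eq_exoProb_mul a, mul_assoc]

lemma WF.sum_MN_cfBasic_mul_joint (hM : M.WF) {S : Finset ν} (hS : Disjoint M.exo S)
    (xv : Asg Val) (T : Finset ν) (tv a : Asg Val) :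
    ∑ r, M.MN.cfBasic (S.image Sum.inl) (liftAsg xv) (T.image Sum.inl) (liftAsg tv)
        (joinAsg a r) * M.MN.joint (joinAsg a r) =
      M.pbBasic a S xv T tv * M.joint a :=
  calc ∑ r, M.MN.cfBasic (S.image Sum.inl) (liftAsg xv) (T.image Sum.inl) (liftAsg tv)
        (joinAsg a r) * M.MN.joint (joinAsg a r)
    _ = ∑ w : Asg Val, if ∀ i ∈ T, w i = tv i then
          if (∀ i ∈ M.exo, w i = a i) ∧ ∀ i ∈ S, w i = xv i then
            ∑ r, if M.Solves ∅ r a ∧ M.Solves S r w then M.MN.exoProb (joinAsg a r) else 0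
          else 0
        else 0 := by
      simp only [hM.MN_cfBasic_mul_joint hS]
      rw [sum_comm]
      refine sum_congr rfl fun w _ => ?_
      split_ifs <;> simp only [sum_const_zero]
    _ = M.joint a * ∑ w : Asg Val, if ∀ i ∈ T, w i = tv i then
          (M.refine a).pdoGivenExo S xv a w else 0 := by
      simp only [hM.sum_ite_solves_and_solves_exoProb, mul_sum, mul_ite_zero,
        pdoGivenExo_eq_ite (M := M.refine a) hS]
      rfl
    _ = M.pbBasic a S xv T tv * M.joint a := by
      by_cases ha : M.exoProb a = 0
      · rw [joint_eq_exoProb_mul, ha, zero_mul, zero_mul, mul_zero]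
      · rw [pbBasic, (hM.refine a).cfBasic_eq_sum_pdoGivenExo hS _ _ _ (by rwa [refine_exoProb]),
          mul_comm]

end POSCM

end CM

theorem PN_B_eq_PN_N_general {ν : Type} {Val : ν → Type} [Fintype ν] [∀ i, Fintype (Val i)]
    [∀ i, Nonempty (Val i)] (M : CM ν Val) (hM : M.WF) (e : CFEvent ν Val)
    (he : Disjoint M.exo e.X) (Z : Finset ν) (zv : Asg Val)
    (_hpos : 0 < ∑ w : Asg Val, if ∀ i ∈ Z, w i = zv i then M.joint w else 0) :
    M.pbProbCond [e] Z zv = M.pnProbCond [e] Z zv := by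
  simp only [CM.pbProbCond, CM.pnProbCond, extProbCond, CM.cfProbCond, liftCFEvent, List.map_cons,
    List.map_nil, List.prod_cons, List.prod_nil, mul_one, ite_mul, zero_mul]
  refine congrArg₂ _ ?_ ?_
  · refine ((sum_ite_liftAsg Z zv _).trans ?_).symm
    simp only [hM.sum_MN_cfBasic_mul_joint he]
  · refine ((sum_ite_liftAsg Z zv _).trans ?_).symm
    simp only [hM.sum_MN_joint]

/-- **Proposition 3 (PN).** Given a causal model `M` and any two binary endogenous
variables `X, Y ∈ V` (with two values, `0` and `1`) such that `P_M(X=1, Y=1) > 0`: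
the Probability of Necessity computed via the B-semantics equals the one computed in
the PO-SCM, i.e.
`PN^B = P^B((Y=0)_{X←0} | X=1, Y=1) = P^N((Y=0)_{X←0} | X=1, Y=1) = PN^N`. -/
theorem PN_B_eq_PN_N
    {ν : Type} {Val : ν → Type} [Fintype ν] [∀ i, Fintype (Val i)] [∀ i, Nonempty (Val i)]
    (M : CM ν Val) (hM : M.WF)
    (X Y : ν) (hX : X ∉ M.exo) (hY : Y ∉ M.exo) (hXY : X ≠ Y)
    (x0 x1 : Val X) (hx : x0 ≠ x1) (hxbin : ∀ v : Val X, v = x0 ∨ v = x1)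
    (y0 y1 : Val Y) (hy : y0 ≠ y1) (hybin : ∀ v : Val Y, v = y0 ∨ v = y1)
    (hpos : 0 < ∑ w : Asg Val, if w X = x1 ∧ w Y = y1 then M.joint w else 0) :
    M.pbProbCond [⟨{X}, Function.update (dfltAsg Val) X x0, {Y}, Function.update (dfltAsg Val) Y y0⟩]
        {X, Y} (Function.update (Function.update (dfltAsg Val) X x1) Y y1)
    = M.pnProbCond [⟨{X}, Function.update (dfltAsg Val) X x0, {Y}, Function.update (dfltAsg Val) Y y0⟩]
        {X, Y} (Function.update (Function.update (dfltAsg Val) X x1) Y y1) := by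
  exact PN_B_eq_PN_N_general M hM _ (disjoint_singleton_right.2 hX) _ _ (by simpa [hXY] using hpos)

end
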